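/- arXiv:2512.00309 — 3 statements merged into one kernel-verified Lean document; each statement's English description precedes it below -/
import Mathlib

section
/- Let K ≥ 1 and for each k ∈ {1,…,K} let h_k > 0, ν_k > 0, P_k > 0, σ̂_k² > 0, and let σ_w² > 0. For a ∈ ℝ and b ∈ ℝ^K define MSE(a,b) = Σ_{k=1}^K (a h_k b_k − 1)² σ̂_k² + a² σ_w², and let the feasible set be 𝔽 = {(a,b) : b_k² ν_k² ≤ P_k for all k}. Then there exists a global minimizer (a*, b*) of MSE over 𝔽 with a* > 0 having the following threshold structure: with S = {k : a* h_k √(P_k)/ν_k ≤ 1}, one has b*_k = √(P_k)/ν_k for k ∈ S (full power) and b*_k = 1/(a* h_k) for k ∉ S (channel inversion), and a* = (Σ_{k∈S} h_k σ̂_k² √(P_k)/ν_k) / (Σ_{k∈S} h_k² σ̂_k² P_k/ν_k² + σ_w²). -/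
open scoped Classical
open Finset

/-- Theorem 3 of the paper: the computation-optimal AirComp transceiver
design in the TDM setting.  Here `sighat k` denotes the estimated feature variance `σ̂_k²`
and `σw2` denotes the receiver noise variance `σ_w²`.  There is a global minimizer
`(a, b)` of the AirComp MSE over the feasible set with `a > 0`, such that devices with
`a h_k √P_k / ν_k ≤ 1` transmit at full power `b_k = √P_k / ν_k`, the remaining devices
use channel inversion `b_k = 1/(a h_k)`, and `a` has the stated closed form. -/
theorem tdm_computation_optimal_threshold_structure
    (K : ℕ) (hK : 1 ≤ K)
    (h ν P sighat : Fin K → ℝ)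
    (hh : ∀ k, 0 < h k) (hν : ∀ k, 0 < ν k) (hP : ∀ k, 0 < P k)
    (hsig : ∀ k, 0 < sighat k)
    (σw2 : ℝ) (hσw2 : 0 < σw2) :
    ∃ (a : ℝ) (b : Fin K → ℝ),
      0 < a ∧
      (∀ k, (b k) ^ 2 * (ν k) ^ 2 ≤ P k) ∧
      (∀ (a' : ℝ) (b' : Fin K → ℝ), (∀ k, (b' k) ^ 2 * (ν k) ^ 2 ≤ P k) →
        (∑ k, (a * h k * b k - 1) ^ 2 * sighat k) + a ^ 2 * σw2 ≤
          (∑ k, (a' * h k * b' k - 1) ^ 2 * sighat k) + a' ^ 2 * σw2) ∧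
      (∀ k, (a * h k * Real.sqrt (P k) / ν k ≤ 1 → b k = Real.sqrt (P k) / ν k) ∧
            (1 < a * h k * Real.sqrt (P k) / ν k → b k = 1 / (a * h k))) ∧
      a = (∑ k ∈ univ.filter (fun k => a * h k * Real.sqrt (P k) / ν k ≤ 1),
              h k * sighat k * Real.sqrt (P k) / ν k) /
          ((∑ k ∈ univ.filter (fun k => a * h k * Real.sqrt (P k) / ν k ≤ 1),
              (h k) ^ 2 * sighat k * P k / (ν k) ^ 2) + σw2) := by
  obtain ⟨c, hc⟩ : ∃ c : Fin K → ℝ, ∀ k, c k = h k * Real.sqrt (P k) / ν k :=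
    ⟨_, fun k => rfl⟩
  have hsq : ∀ k, 0 < Real.sqrt (P k) := fun k => Real.sqrt_pos.2 (hP k)
  have hcpos : ∀ k, 0 < c k := fun k => by
    rw [hc]; exact div_pos (mul_pos (hh k) (hsq k)) (hν k)
  have hac : ∀ (a : ℝ) k, a * h k * Real.sqrt (P k) / ν k = a * c k := fun a k => by
    rw [hc]; ring
  have hne : (univ : Finset (Fin K)).Nonempty := ⟨⟨0, hK⟩, mem_univ _⟩
  have hT : 0 < ∑ k, sighat k * c k :=
    Finset.sum_pos (fun k _ => mul_pos (hsig k) (hcpos k)) hne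
  obtain ⟨a, ha0, haG⟩ : ∃ a : ℝ, 0 < a ∧
      a * σw2 = ∑ k, sighat k * c k * max (1 - a * c k) 0 := by
    let G : ℝ → ℝ := fun a => a * σw2 - ∑ k, sighat k * c k * max (1 - a * c k) 0
    have hG : Continuous G := by fun_prop
    have hM : 0 < (∑ k, sighat k * c k) / σw2 := div_pos hT hσw2
    have h0 : G 0 < 0 := by simp [G]; exact hT
    have h1 : 0 ≤ G ((∑ k, sighat k * c k) / σw2) := by
      simp only [G]
      rw [div_mul_cancel₀ _ hσw2.ne', sub_nonneg]
      apply Finset.sum_le_sum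
      intro k _
      have h2 : max (1 - (∑ k, sighat k * c k) / σw2 * c k) 0 ≤ 1 :=
        max_le (by linarith [mul_pos hM (hcpos k)]) zero_le_one
      exact mul_le_of_le_one_right (mul_pos (hsig k) (hcpos k)).le h2
    obtain ⟨a, ⟨ha, -⟩, hGa⟩ := intermediate_value_Icc hM.le hG.continuousOn ⟨h0.le, h1⟩
    refine ⟨a, lt_of_le_of_ne ha ?_, ?_⟩
    · rintro rfl
      exact h0.ne hGa
    · exact sub_eq_zero.1 hGa
  have hb : ∀ k, ∃ b : ℝ, b ^ 2 * ν k ^ 2 ≤ P k ∧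
      (a * h k * b - 1) ^ 2 = (max (1 - a * c k) 0) ^ 2 ∧
      (a * c k ≤ 1 → b = Real.sqrt (P k) / ν k) ∧ (1 < a * c k → b = 1 / (a * h k)) := by
    intro k
    have hνk := hν k
    have hhk := hh k
    have hs := Real.sq_sqrt (hP k).le
    by_cases hk : a * c k ≤ 1
    · refine ⟨Real.sqrt (P k) / ν k, ?_, ?_, fun _ => rfl, fun h' => absurd hk (not_le.2 h')⟩
      · rw [div_pow, hs, div_mul_cancel₀ _ (by positivity)]
      · rw [max_eq_left (by linarith), hc]; ring
    · have hk' := not_le.1 hk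
      refine ⟨1 / (a * h k), ?_, ?_, fun h' => absurd h' hk, fun _ => rfl⟩
      · have h3 : ν k ≤ a * h k * Real.sqrt (P k) := by
          rw [← hac, lt_div_iff₀ hνk] at hk'
          linarith
        have h4 : 1 / (a * h k) * ν k ≤ Real.sqrt (P k) := by
          rw [div_mul_eq_mul_div, one_mul, div_le_iff₀ (by positivity)]
          linarith
        rw [← mul_pow, ← hs]
        exact pow_le_pow_left₀ (by positivity) h4 2
      · rw [max_eq_right (by linarith), mul_one_div_cancel (by positivity)]
        norm_num
  choose b hb1 hb2 hb3 hb4 using hb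
  refine ⟨a, b, ha0, hb1, ?_, ?_, ?_⟩
  · intro a' b' hb'
    have key : ∀ k, (a * h k * b k - 1) ^ 2 * sighat k +
        2 * (a - |a'|) * (sighat k * c k * max (1 - a * c k) 0) ≤
        (a' * h k * b' k - 1) ^ 2 * sighat k := by
      intro k
      rw [hb2]
      have hx : a' * h k * b' k ≤ |a'| * c k := by
        have h5 : |b' k| ≤ Real.sqrt (P k) / ν k := by
          rw [le_div_iff₀ (hν k), ← abs_of_pos (hν k), ← abs_mul]
          exact Real.abs_le_sqrt (by rw [mul_pow]; exact hb' k)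
        calc a' * h k * b' k ≤ |a' * h k * b' k| := le_abs_self _
          _ = |a'| * h k * |b' k| := by rw [abs_mul, abs_mul, abs_of_pos (hh k)]
          _ ≤ |a'| * h k * (Real.sqrt (P k) / ν k) :=
            mul_le_mul_of_nonneg_left h5 (mul_nonneg (abs_nonneg _) (hh k).le)
          _ = |a'| * c k := by rw [hc]; ring
      generalize a' * h k * b' k = x at hx
      have h6 : (max (1 - a * c k) 0) ^ 2 + 2 * (a - |a'|) * (c k * max (1 - a * c k) 0)
          ≤ (x - 1) ^ 2 := by
        rcases le_total (1 - a * c k) 0 with hm | hm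
        · rw [max_eq_right hm]; nlinarith [sq_nonneg (x - 1)]
        · rw [max_eq_left hm]
          nlinarith [sq_nonneg (1 - x - (1 - a * c k)), mul_nonneg hm (sub_nonneg.2 hx)]
      have := mul_le_mul_of_nonneg_right h6 (hsig k).le
      linarith
    have hsum := Finset.sum_le_sum (fun k (_ : k ∈ (univ : Finset (Fin K))) => key k)
    rw [Finset.sum_add_distrib, ← Finset.mul_sum, ← haG] at hsum
    have h7 := mul_nonneg (sq_nonneg (a - |a'|)) hσw2.le
    have h8 : |a'| ^ 2 = a' ^ 2 := sq_abs a'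
    rw [← h8]
    nlinarith
  · intro k
    rw [hac]
    exact ⟨hb3 k, hb4 k⟩
  · simp only [hac]
    have hden : 0 ≤ ∑ k ∈ univ.filter (fun k => a * c k ≤ 1),
        (h k) ^ 2 * sighat k * P k / (ν k) ^ 2 :=
      Finset.sum_nonneg fun k _ => by
        have := hh k; have := hsig k; have := hP k; have := hν k
        positivity
    rw [eq_div_iff (by linarith), mul_add, haG, Finset.mul_sum, ← eq_sub_iff_add_eq',
      ← Finset.sum_sub_distrib, Finset.sum_filter]
    apply Finset.sum_congr rfl
    intro k _
    have hs := Real.sq_sqrt (hP k).le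
    split_ifs with hk
    · rw [max_eq_left (by linarith), hc]
      nth_rewrite 4 [← hs]
      ring
    · rw [max_eq_right (by linarith), mul_zero]
end

section
/- Let K ≥ 1, u_k > 0 for k ∈ {1,…,K}, and s > 0. Define F(c) = (Σ_{k=1}^K c_k)² / (Σ_{k=1}^K c_k² + s) for c in the box B = ∏_{k=1}^K [0, u_k]. Then there exists τ ≥ 0 such that the point c* with c*_k = min(u_k, τ) for all k satisfies F(c*) ≥ F(c) for every c ∈ B. That is, the decision-optimal power allocation has a threshold (capped) structure in which coordinates with u_k ≤ τ are saturated at u_k and all remaining coordinates equal the common cap τ. -/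
open Finset

/-- Theorem 4 of the paper: the decision-optimal power allocation in the
TDM setting has a threshold (capped) structure.  With
`F(c) = (Σ c_k)² / (Σ c_k² + s)` on the box `0 ≤ c_k ≤ u_k`, there exists a cap `τ ≥ 0`
such that `c*_k = min (u_k, τ)` is a global maximizer of `F` over the box. -/
theorem tdm_decision_optimal_capped_structure
    (K : ℕ) (hK : 1 ≤ K)
    (u : Fin K → ℝ) (hu : ∀ k, 0 < u k)
    (s : ℝ) (hs : 0 < s) :
    ∃ τ : ℝ, 0 ≤ τ ∧
      ∀ c : Fin K → ℝ, (∀ k, 0 ≤ c k ∧ c k ≤ u k) →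
        (∑ k, c k) ^ 2 / ((∑ k, (c k) ^ 2) + s) ≤
          (∑ k, min (u k) τ) ^ 2 / ((∑ k, (min (u k) τ) ^ 2) + s) := by
  obtain ⟨τ, hτ0, hτ⟩ : ∃ τ : ℝ, 0 < τ ∧ ∑ k, (τ - min (u k) τ) * min (u k) τ = s := by
    let k0 : Fin K := ⟨0, hK⟩
    let g : ℝ → ℝ := fun τ => ∑ k, (τ - min (u k) τ) * min (u k) τ
    have hg : Continuous g := by fun_prop
    have h0 : g 0 = 0 := by
      apply Finset.sum_eq_zero
      intro k _
      simp [min_eq_right (hu k).le]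
    have hT : 0 ≤ u k0 + s / u k0 := by have := hu k0; positivity
    have h1 : s ≤ g (u k0 + s / u k0) := by
      have hle : u k0 ≤ u k0 + s / u k0 := by
        have : 0 ≤ s / u k0 := div_nonneg hs.le (hu k0).le
        linarith
      have := Finset.single_le_sum (f := fun k => (u k0 + s / u k0 - min (u k) (u k0 + s / u k0))
        * min (u k) (u k0 + s / u k0)) (s := Finset.univ)
        (fun k _ => mul_nonneg (sub_nonneg.2 (min_le_right _ _)) (le_min (hu k).le hT))
        (Finset.mem_univ k0)
      simp only [min_eq_left hle] at this
      have e : (u k0 + s / u k0 - u k0) * u k0 = s := by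
        have := (hu k0).ne'
        field_simp
        ring
      rw [e] at this
      exact this
    obtain ⟨τ, hm, he⟩ := intermediate_value_Icc hT hg.continuousOn
      (show s ∈ Set.Icc (g 0) (g (u k0 + s / u k0)) from ⟨by rw [h0]; exact hs.le, h1⟩)
    refine ⟨τ, lt_of_le_of_ne hm.1 ?_, he⟩
    rintro rfl
    rw [h0] at he
    exact hs.ne he
  refine ⟨τ, hτ0.le, fun c hc => ?_⟩
  obtain ⟨m, hm⟩ : ∃ m : Fin K → ℝ, m = fun k => min (u k) τ := ⟨_, rfl⟩
  have hmk : ∀ k, min (u k) τ = m k := fun k => by rw [hm]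
  simp only [hmk] at hτ ⊢
  have hm0 : ∀ k, 0 ≤ m k := fun k => by rw [← hmk]; exact le_min (hu k).le hτ0.le
  have hkey : ∑ k, (τ - m k) * c k ≤ s := by
    rw [← hτ]
    apply Finset.sum_le_sum
    intro k _
    rw [← hmk]
    rcases le_total (u k) τ with h | h
    · rw [min_eq_left h]
      exact mul_le_mul_of_nonneg_left (hc k).2 (sub_nonneg.2 h)
    · rw [min_eq_right h]; simp
  have e1 : ∑ k, (τ - m k) * c k = τ * ∑ k, c k - ∑ k, m k * c k := by
    rw [Finset.mul_sum, ← Finset.sum_sub_distrib]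
    exact Finset.sum_congr rfl fun k _ => by ring
  have e2 : ∑ k, (τ - m k) * m k = τ * ∑ k, m k - ∑ k, m k ^ 2 := by
    rw [Finset.mul_sum, ← Finset.sum_sub_distrib]
    exact Finset.sum_congr rfl fun k _ => by ring
  have hcs := Finset.sum_mul_sq_le_sq_mul_sq Finset.univ m c
  have ham : 2 * ∑ k, m k * c k ≤ ∑ k, m k ^ 2 + ∑ k, c k ^ 2 := by
    rw [Finset.mul_sum, ← Finset.sum_add_distrib]
    exact Finset.sum_le_sum fun k _ => by nlinarith [sq_nonneg (m k - c k)]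
  have hS : 0 ≤ ∑ k, c k := Finset.sum_nonneg fun k _ => (hc k).1
  have hA : 0 ≤ ∑ k, m k := Finset.sum_nonneg fun k _ => hm0 k
  have hC : 0 ≤ ∑ k, c k ^ 2 := Finset.sum_nonneg fun k _ => sq_nonneg _
  have hQ : 0 ≤ ∑ k, m k ^ 2 := Finset.sum_nonneg fun k _ => sq_nonneg _
  rw [e1] at hkey
  rw [e2] at hτ
  generalize ∑ k, m k * c k = P at *
  generalize ∑ k, c k ^ 2 = C at *
  generalize ∑ k, m k ^ 2 = Q at *
  generalize ∑ k, c k = S at *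
  generalize ∑ k, m k = A at *
  have hD : Q + s = τ * A := by linarith
  rw [div_le_div_iff₀ (by linarith) (by linarith), hD]
  have h1 : (τ * S) ^ 2 ≤ (P + s) ^ 2 :=
    pow_le_pow_left₀ (mul_nonneg hτ0.le hS) (by linarith) 2
  have h2 : (P + s) ^ 2 ≤ (Q + s) * (C + s) := by
    nlinarith [mul_le_mul_of_nonneg_left ham hs.le]
  rw [hD] at h2
  have h3 : τ * S ^ 2 ≤ A * (C + s) := by
    refine le_of_mul_le_mul_left ?_ hτ0
    linarith
  nlinarith [mul_le_mul_of_nonneg_left h3 hA]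
end

section
/- Let K ≥ 1, let σ² > 0, let σ_1²,…,σ_K² > 0, and define ϱ_k = σ²/(σ² + σ_k²) for each k. Then (Σ_{k=1}^K ϱ_k)² · (Σ_{k=1}^K σ_k²) ≥ K² · (Σ_{k=1}^K ϱ_k² σ_k²), with equality if and only if σ_1² = σ_2² = ⋯ = σ_K². -/
open Finset

/-- MMSE aggregation beats ML aggregation: with shrinkage weights
`ϱ_k = σ²/(σ² + σ_k²)`, one has `(Σ ϱ_k)² (Σ σ_k²) ≥ K² (Σ ϱ_k² σ_k²)`, with equality iff
all sensing noise variances are equal.  Here `σk k` denotes the variance `σ_k²` and `σ2`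
denotes the prior variance `σ²`. -/
theorem mmse_aggregation_inequality
    (K : ℕ) (hK : 1 ≤ K)
    (σ2 : ℝ) (hσ2 : 0 < σ2)
    (σk : Fin K → ℝ) (hσk : ∀ k, 0 < σk k) :
    (K : ℝ) ^ 2 * (∑ k, (σ2 / (σ2 + σk k)) ^ 2 * σk k) ≤
        (∑ k, σ2 / (σ2 + σk k)) ^ 2 * (∑ k, σk k) ∧
    ((∑ k, σ2 / (σ2 + σk k)) ^ 2 * (∑ k, σk k) =
        (K : ℝ) ^ 2 * (∑ k, (σ2 / (σ2 + σk k)) ^ 2 * σk k) ↔ ∀ k j, σk k = σk j) := by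
  set p : Fin K → ℝ := fun k => σ2 / (σ2 + σk k) with hp
  have hpos : ∀ k, 0 < p k := fun k => div_pos hσ2 (add_pos hσ2 (hσk k))
  have hKpos : (0 : ℝ) < K := by exact_mod_cast hK
  have ha : ∀ k, σk k = σ2 * (p k)⁻¹ - σ2 := by
    intro k
    have := (add_pos hσ2 (hσk k)).ne'
    simp only [hp]
    field_simp
    ring
  have hb : ∀ k, (p k) ^ 2 * σk k = σ2 * p k - σ2 * (p k) ^ 2 := by
    intro k
    have := (hpos k).ne'
    rw [ha k]
    field_simp
  have hA : ∑ k, σk k = σ2 * (∑ k, (p k)⁻¹) - K * σ2 := by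
    rw [Finset.sum_congr rfl (fun k _ => ha k), Finset.sum_sub_distrib, ← Finset.mul_sum]
    simp
  have hB : ∑ k, (p k) ^ 2 * σk k = σ2 * (∑ k, p k) - σ2 * ∑ k, (p k) ^ 2 := by
    rw [Finset.sum_congr rfl (fun k _ => hb k), Finset.sum_sub_distrib, ← Finset.mul_sum,
      ← Finset.mul_sum]
  have hPR : (K : ℝ) ^ 2 ≤ (∑ k, p k) * ∑ k, (p k)⁻¹ := by
    have h := Finset.sum_sq_le_sum_mul_sum_of_sq_eq_mul (Finset.univ : Finset (Fin K))
      (r := fun _ => (1 : ℝ)) (f := p) (g := fun k => (p k)⁻¹)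
      (fun k _ => (hpos k).le) (fun k _ => (inv_pos.2 (hpos k)).le)
      (fun k _ => by rw [mul_inv_cancel₀ (hpos k).ne']; norm_num)
    simpa using h
  have hD : ∑ i, ∑ j, (p i - p j) ^ 2 = 2 * (K * (∑ k, (p k) ^ 2) - (∑ k, p k) ^ 2) := by
    simp only [sub_sq, Finset.sum_add_distrib, Finset.sum_sub_distrib, ← Finset.mul_sum,
      ← Finset.sum_mul]
    simp [← Finset.mul_sum, ← Finset.sum_mul]
    ring
  have hD0 : 0 ≤ ∑ i, ∑ j, (p i - p j) ^ 2 :=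
    Finset.sum_nonneg fun i _ => Finset.sum_nonneg fun j _ => sq_nonneg _
  have hP : 0 ≤ ∑ k, p k := Finset.sum_nonneg fun k _ => (hpos k).le
  have key : (∑ k, p k) ^ 2 * (∑ k, σk k) - (K : ℝ) ^ 2 * (∑ k, (p k) ^ 2 * σk k) =
      σ2 * ((∑ k, p k) * ((∑ k, p k) * (∑ k, (p k)⁻¹) - (K : ℝ) ^ 2)) +
        σ2 * K / 2 * ∑ i, ∑ j, (p i - p j) ^ 2 := by
    rw [hA, hB, hD]
    ring
  have h1 : 0 ≤ σ2 * ((∑ k, p k) * ((∑ k, p k) * (∑ k, (p k)⁻¹) - (K : ℝ) ^ 2)) :=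
    mul_nonneg hσ2.le (mul_nonneg hP (sub_nonneg.2 hPR))
  have hc : 0 < σ2 * K / 2 := by positivity
  have h2 := mul_nonneg hc.le hD0
  change (K : ℝ) ^ 2 * (∑ k, (p k) ^ 2 * σk k) ≤ (∑ k, p k) ^ 2 * (∑ k, σk k) ∧
    ((∑ k, p k) ^ 2 * (∑ k, σk k) = (K : ℝ) ^ 2 * (∑ k, (p k) ^ 2 * σk k) ↔ _)
  refine ⟨by linarith, fun h => ?_, fun h => ?_⟩
  · have h3 : σ2 * K / 2 * ∑ i, ∑ j, (p i - p j) ^ 2 = 0 := by linarith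
    have h4 := (mul_eq_zero.1 h3).resolve_left hc.ne'
    intro k j
    have h5 := (Finset.sum_eq_zero_iff_of_nonneg
      (fun i _ => Finset.sum_nonneg fun j _ => sq_nonneg (p i - p j))).1 h4 k (Finset.mem_univ k)
    have h6 := (Finset.sum_eq_zero_iff_of_nonneg
      (fun j _ => sq_nonneg (p k - p j))).1 h5 j (Finset.mem_univ j)
    have h7 : p k = p j := sub_eq_zero.1 (pow_eq_zero_iff two_ne_zero |>.1 h6)
    rw [ha k, ha j, h7]
  · let z : Fin K := ⟨0, hK⟩
    have e1 : ∀ k, σk k = σk z := fun k => h k z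
    have e2 : ∀ k, p k = p z := fun k => by simp only [hp, e1 k]
    rw [Finset.sum_congr rfl (fun k _ => e1 k), Finset.sum_congr rfl (fun k _ => e2 k),
      Finset.sum_congr rfl (fun k _ => (by rw [e1 k, e2 k] :
        (p k) ^ 2 * σk k = (p z) ^ 2 * σk z))]
    simp only [Finset.sum_const, Finset.card_univ, Fintype.card_fin, nsmul_eq_mul]
    ring
end
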